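/- arXiv:2005.11792 — 2 statements merged into one kernel-verified Lean document; each statement's English description precedes it below -/
import Mathlib

section
/- Let π* be an optimal assignment for weights w. Then the set of allowable perturbations for (w, π*), regarded as a subset of the space of functions A × T → ℝ with the product topology, is closed and convex. -/
open Finset Filter Topology

/-- Cost of an assignment `π : T → A` under weights `w : A × T → ℝ`. -/
noncomputable def cost {A T : Type*} [Fintype T] (w : A × T → ℝ) (π : T → A) : ℝ :=
  ∑ b : T, w (π b, b)

/-- `πs` is an optimal assignment for weights `w`: it is injective (an assignment)
and minimizes the cost among all assignments. -/
def Optimal {A T : Type*} [Fintype T] (w : A × T → ℝ) (πs : T → A) : Prop :=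
  Function.Injective πs ∧ ∀ π : T → A, Function.Injective π → cost w πs ≤ cost w π

/-- `δ` is an allowable perturbation for `(w, πs)`: `πs` remains optimal for `w + δ`. -/
def Allowable {A T : Type*} [Fintype T] (w δ : A × T → ℝ) (πs : T → A) : Prop :=
  Optimal (w + δ) πs

theorem cost_add {A T : Type*} [Fintype T] (v w : A × T → ℝ) (π : T → A) :
    cost (v + w) π = cost v π + cost w π := by
  simp [cost, Finset.sum_add_distrib]

theorem cost_smul {A T : Type*} [Fintype T] (c : ℝ) (w : A × T → ℝ) (π : T → A) :
    cost (c • w) π = c * cost w π := by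
  simp [cost, Finset.mul_sum]

theorem continuous_cost {A T : Type*} [Fintype T] (π : T → A) :
    Continuous fun w : A × T → ℝ => cost w π := by
  unfold cost
  fun_prop

theorem isClosed_setOf_optimal {A T : Type*} [Fintype T] (πs : T → A) :
    IsClosed {w : A × T → ℝ | Optimal w πs} := by
  simp only [Optimal, Set.ofPred_and, Set.ofPred_forall]
  exact isClosed_const.inter <| isClosed_iInter fun π => isClosed_iInter fun _ =>
    isClosed_le (continuous_cost πs) (continuous_cost π)

theorem convex_setOf_optimal {A T : Type*} [Fintype T] (πs : T → A) :
    Convex ℝ {w : A × T → ℝ | Optimal w πs} := by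
  rintro v ⟨hinj, hv⟩ w ⟨_, hw⟩ a b ha hb _
  refine ⟨hinj, fun π hπ => ?_⟩
  simp only [cost_add, cost_smul]
  exact add_le_add (mul_le_mul_of_nonneg_left (hv π hπ) ha)
    (mul_le_mul_of_nonneg_left (hw π hπ) hb)

theorem stmt9 {A T : Type*} [Fintype A] [Fintype T] [Nonempty A] [Nonempty T]
    (hAT : Fintype.card T ≤ Fintype.card A)
    (w : A × T → ℝ) (πs : T → A)
    (hopt : Optimal w πs) :
    IsClosed {δ : A × T → ℝ | Allowable w δ πs} ∧
    Convex ℝ {δ : A × T → ℝ | Allowable w δ πs} := by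
  exact ⟨(isClosed_setOf_optimal πs).preimage (continuous_const_add w),
    (convex_setOf_optimal πs).translate_preimage_right w⟩
end

section
/- Let π* be an optimal assignment for weights w and let δ be an allowable perturbation for (w, π*). Then δ is critical if and only if s_{w+δ}(a,b) = 0 for every edge (a,b), where s_{w+δ} denotes the element-wise sensitivities computed with weights w + δ and assignment π*. -/
open Finset Filter Topology

-- The element-wise sensitivity of edge `(a, b)` for weights `w` and assignment `πs`.
open Classical in
noncomputable def sens {A T : Type*} [Fintype T] (w : A × T → ℝ) (πs : T → A)
    (a : A) (b : T) : ℝ :=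
  if πs b = a then
    sInf {c | ∃ π : T → A, Function.Injective π ∧ π b ≠ a ∧ cost w π = c} - cost w πs
  else
    cost w πs - sInf {c | ∃ π : T → A, Function.Injective π ∧ π b = a ∧ cost w π = c}

-- An allowable perturbation `δ` for `(w, πs)` is critical if increasing it by any `ε > 0`
-- on an assigned edge (resp. decreasing by `ε` on an unassigned edge) destroys allowability.
open Classical in
def Critical {A T : Type*} [Fintype T] (w δ : A × T → ℝ) (πs : T → A) : Prop :=
  ∀ (i : A) (j : T), ∀ ε > (0 : ℝ),
    ¬ Allowable w
      (fun e => if e = (i, j) then (if πs j = i then δ e + ε else δ e - ε) else δ e) πs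

open Classical in
/-- Perturbing a single edge `(i, j)` by `c` changes the cost by `c` exactly for the assignments
using that edge. -/
theorem cost_add_single {A T : Type*} [Fintype T] (v : A × T → ℝ) (i : A) (j : T) (c : ℝ)
    (π : T → A) :
    cost (fun e => v e + if e = (i, j) then c else 0) π = cost v π + if π j = i then c else 0 := by
  have h (b : T) : (if (π b, b) = (i, j) then c else 0) = if j = b then
      (if π j = i then c else 0) else 0 := by
    by_cases hb : j = b
    · subst hb; simp
    · simp [hb, Ne.symm hb]
  simp only [cost, Finset.sum_add_distrib, h]
  simp

open Classical in
/-- The one-edge perturbation of an allowable `δ` stays allowable iff every assignment that differs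
from `πs` on that edge is costlier than `πs` by at least `ε`. -/
theorem allowable_perturb_iff {A T : Type*} [Fintype T] {w δ : A × T → ℝ} {πs : T → A}
    (hδ : Allowable w δ πs) (i : A) (j : T) (ε : ℝ) :
    Allowable w
      (fun e => if e = (i, j) then (if πs j = i then δ e + ε else δ e - ε) else δ e) πs ↔
    ∀ π : T → A, Function.Injective π → (π j = i ↔ πs j ≠ i) →
      cost (w + δ) πs + ε ≤ cost (w + δ) π := by
  have hw : (w + fun e => if e = (i, j) then (if πs j = i then δ e + ε else δ e - ε) else δ e) =
      fun e => (w + δ) e + if e = (i, j) then (if πs j = i then ε else -ε) else 0 := by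
    funext e
    simp only [Pi.add_apply]
    split_ifs <;> ring
  unfold Allowable Optimal
  rw [hw]
  simp only [cost_add_single]
  refine ⟨fun h π hπ hd => ?_, fun h => ⟨hδ.1, fun π hπ => ?_⟩⟩
  · have := h.2 π hπ
    by_cases h1 : πs j = i <;> simp [h1] at hd this <;> simp [hd] at this <;> linarith
  · have h0 := hδ.2 π hπ
    have h2 := h π hπ
    by_cases h1 : πs j = i <;> by_cases h3 : π j = i <;> simp [h1, h3] at h2 ⊢ <;> linarith

/-- Every edge has an assignment that differs from the given one on that edge. -/
theorem exists_injective_differing {A T : Type*} [Nontrivial T] {πs : T → A}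
    (hs : Function.Injective πs) (i : A) (j : T) :
    ∃ π : T → A, Function.Injective π ∧ (π j = i ↔ πs j ≠ i) := by
  classical
  by_cases h : πs j = i
  · obtain ⟨k, hk⟩ := exists_ne j
    refine ⟨πs ∘ Equiv.swap j k, hs.comp (Equiv.injective _), ?_⟩
    simpa [h] using fun h' => hk (hs (h'.trans h.symm))
  · exact ⟨Equiv.swap (πs j) i ∘ πs, (Equiv.injective _).comp hs, by simp [h]⟩

/-- A lower bound of a nonempty set of reals is its infimum iff the set comes arbitrarily close
to it. -/
theorem csInf_eq_iff_forall_pos {S : Set ℝ} {m : ℝ} (hS : S.Nonempty) (hm : ∀ c ∈ S, m ≤ c) :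
    sInf S = m ↔ ∀ ε > 0, ∃ c ∈ S, c < m + ε := by
  refine ⟨fun h ε hε => exists_lt_of_csInf_lt hS (by linarith), fun h => ?_⟩
  refine csInf_eq_of_forall_ge_of_forall_gt_exists_lt hS hm fun x hx => ?_
  obtain ⟨c, hc, hcx⟩ := h (x - m) (by linarith)
  exact ⟨c, hc, by linarith⟩

/-- The sensitivity vanishes iff the cheapest assignment differing from `πs` on the edge costs as
much as `πs`. -/
theorem sens_eq_zero_iff {A T : Type*} [Fintype T] (v : A × T → ℝ) (πs : T → A) (a : A) (b : T) :
    sens v πs a b = 0 ↔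
      sInf {c | ∃ π : T → A, Function.Injective π ∧ (π b = a ↔ πs b ≠ a) ∧ cost v π = c} =
        cost v πs := by
  by_cases h : πs b = a
  · simp [sens, h, sub_eq_zero]
  · simp [sens, h, sub_eq_zero, eq_comm (a := cost v πs)]

theorem stmt11 {A T : Type*} [Fintype A] [Fintype T] [Nonempty A] [Nonempty T]
    (hT : 2 ≤ Fintype.card T) (hAT : Fintype.card T ≤ Fintype.card A)
    (w δ : A × T → ℝ) (πs : T → A)
    (hopt : Optimal w πs)
    (hδ : Allowable w δ πs) :
    Critical w δ πs ↔ ∀ a b, sens (w + δ) πs a b = 0 := by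
  have : Nontrivial T := Fintype.one_lt_card_iff_nontrivial.mp hT
  refine forall₂_congr fun a b => ?_
  obtain ⟨π, hπ, hd⟩ := exists_injective_differing hδ.1 a b
  rw [sens_eq_zero_iff, csInf_eq_iff_forall_pos]
  · refine forall₂_congr fun ε _ => ?_
    rw [allowable_perturb_iff hδ]
    push Not
    constructor
    · rintro ⟨π, hπ, hd, hlt⟩
      exact ⟨_, ⟨π, hπ, hd, rfl⟩, hlt⟩
    · rintro ⟨_, ⟨π, hπ, hd, rfl⟩, hlt⟩
      exact ⟨π, hπ, hd, hlt⟩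
  · exact ⟨_, π, hπ, hd, rfl⟩
  · rintro _ ⟨π, hπ, -, rfl⟩
    exact hδ.2 π hπ
end
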